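/- In the field ℚ(t) of rational functions, Δ_{3,3,2,4}(t) = P(t)·Or_{3,3,2,4}(t), where P(t) = (1−t⁶)(1−t⁷)/((1−t²)(1−t⁴)(1−t³)(1−t³)); equivalently Δ_{3,3,2,4}(t) = (1−t⁶)(1−t⁷)/(1−t)². (This is the identity ∏_{j=1}^{2} ζ̄_{X,j}(t) = P_{X̃₀}(t)·Or_{X̃₀}(t) of the main theorem for the virtual singularity X = M_{1,−1}, whose dual series has k=0 element M_{1,0} with weight system (2,4,3,3; 6,7) and whose Gabrielov numbers are 3,3;2,4.) -/

import Mathlib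

/-!
Put `[n] = 1 + t + ⋯ + t^(n-1)`. Since `t` has infinite order in `ℚ(t)ˣ`, every factor `t ^ n - 1`
with `n ≠ 0` is nonzero, so each quotient `(t ^ n - 1) / (t - 1)` is the polynomial `[n]`.
Expanding `Δ` for `γ = (3, 3, 2, 4)` in terms of these, the second equality becomes the polynomial
identity `Δ = [6] [7]`. The first one follows from it: the denominator of the Poincaré series is,
up to order, the numerator of `Orb ![3, 3, 2, 4]`, and the two cancel.
-/

open Finset

/-- The generator `t` of the field `ℚ(t)` of rational functions. -/
noncomputable def t : RatFunc ℚ := RatFunc.X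

/-- `Δ_{γ₁,γ₂,γ₃,γ₄}(t)`, the characteristic polynomial of the Coxeter element
corresponding to the graph `S_{γ₁,γ₂,γ₃,γ₄}`. -/
noncomputable def Δ (γ : Fin 4 → ℕ) : RatFunc ℚ :=
  (t ^ 3 - 2 * t ^ 2 - 2 * t + 1) * ∏ i, (t ^ γ i - 1) / (t - 1)
    + t ^ 2 * ∑ i, ((t ^ (γ i - 1) - 1) / (t - 1)) *
        ∏ j ∈ univ.erase i, (t ^ γ j - 1) / (t - 1)

/-- `Or_{γ₁,γ₂,γ₃,γ₄}(t) = (1-t)⁻² · ∏ᵢ (1 - t^{γᵢ})`. -/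
noncomputable def Orb (γ : Fin 4 → ℕ) : RatFunc ℚ :=
  ((1 - t) ^ 2)⁻¹ * ∏ i, (1 - t ^ γ i)

/-- No positive power of `t` is `1`, so the denominators in `stmt_17` do not vanish. -/
theorem one_sub_t_pow_ne_zero {n : ℕ} (hn : n ≠ 0) : 1 - t ^ n ≠ 0 := by
  intro h
  have h1 : algebraMap (Polynomial ℚ) (RatFunc ℚ) (Polynomial.X ^ n - 1) = 0 := by
    rw [map_sub, map_pow, RatFunc.algebraMap_X, map_one, ← neg_sub]
    exact neg_eq_zero.mpr h
  exact Polynomial.X_pow_sub_C_ne_zero (Nat.pos_of_ne_zero hn) (1 : ℚ)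
    (by simpa using RatFunc.algebraMap_injective ℚ (h1.trans (map_zero _).symm))

theorem Δ_eq : Δ ![3, 3, 2, 4] = (1 - t ^ 6) * (1 - t ^ 7) / (1 - t) ^ 2 := by
  have h1 : 1 - t ≠ 0 := by simpa using one_sub_t_pow_ne_zero one_ne_zero
  have h2 : t - 1 ≠ 0 := by rw [← neg_sub]; exact neg_ne_zero.mpr h1
  have e0 : (univ : Finset (Fin 4)).erase 0 = {1, 2, 3} := by decide
  have e1 : (univ : Finset (Fin 4)).erase 1 = {0, 2, 3} := by decide
  have e2 : (univ : Finset (Fin 4)).erase 2 = {0, 1, 3} := by decide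
  have e3 : (univ : Finset (Fin 4)).erase 3 = {0, 1, 2} := by decide
  have q2 : (t ^ 2 - 1) / (t - 1) = 1 + t := by rw [div_eq_iff h2]; ring
  have q3 : (t ^ 3 - 1) / (t - 1) = 1 + t + t ^ 2 := by rw [div_eq_iff h2]; ring
  have q4 : (t ^ 4 - 1) / (t - 1) = 1 + t + t ^ 2 + t ^ 3 := by rw [div_eq_iff h2]; ring
  have hΔ : Δ ![3, 3, 2, 4]
      = (t ^ 3 - 2 * t ^ 2 - 2 * t + 1)
          * ((1 + t + t ^ 2) * (1 + t + t ^ 2) * (1 + t) * (1 + t + t ^ 2 + t ^ 3))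
        + t ^ 2 * ((1 + t) * ((1 + t + t ^ 2) * ((1 + t) * (1 + t + t ^ 2 + t ^ 3)))
          + (1 + t) * ((1 + t + t ^ 2) * ((1 + t) * (1 + t + t ^ 2 + t ^ 3)))
          + 1 * ((1 + t + t ^ 2) * ((1 + t + t ^ 2) * (1 + t + t ^ 2 + t ^ 3)))
          + (1 + t + t ^ 2) * ((1 + t + t ^ 2) * ((1 + t + t ^ 2) * (1 + t)))) := by
    simp [Δ, -prod_div_distrib, Fin.sum_univ_four, Fin.prod_univ_four, e0, e1, e2, e3,
      q2, q3, q4, div_self h2]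
  rw [hΔ, eq_div_iff (pow_ne_zero 2 h1)]
  ring

/-- The main theorem for the virtual singularity `M_{1,-1}` (Gabrielov numbers
`3,3;2,4`; dual `k=0` element `M_{1,0}` with weight system `(2,4,3,3;6,7)`). -/
theorem stmt_17 :
    Δ ![3, 3, 2, 4]
      = (1 - t ^ 6) * (1 - t ^ 7) /
          ((1 - t ^ 2) * (1 - t ^ 4) * (1 - t ^ 3) * (1 - t ^ 3))
        * Orb ![3, 3, 2, 4]
    ∧ Δ ![3, 3, 2, 4] = (1 - t ^ 6) * (1 - t ^ 7) / (1 - t) ^ 2 := by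
  refine ⟨?_, Δ_eq⟩
  have h1 : 1 - t ≠ 0 := by simpa using one_sub_t_pow_ne_zero one_ne_zero
  have h2 : 1 - t ^ 2 ≠ 0 := one_sub_t_pow_ne_zero two_ne_zero
  have h3 : 1 - t ^ 3 ≠ 0 := one_sub_t_pow_ne_zero three_ne_zero
  have h4 : 1 - t ^ 4 ≠ 0 := one_sub_t_pow_ne_zero four_ne_zero
  have hOrb : Orb ![3, 3, 2, 4]
      = ((1 - t) ^ 2)⁻¹ * ((1 - t ^ 3) * (1 - t ^ 3) * (1 - t ^ 2) * (1 - t ^ 4)) := by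
    simp [Orb, Fin.prod_univ_four]
  rw [Δ_eq, hOrb]
  field_simp
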